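/- Assume A is standardized and let x ∈ range(Aᵀ). Then (1/m) Σ_{i=1}^m ‖x − (A^{(i)}x − b_i)·(A^{(i)})ᵀ − x⋆‖₂² ≤ (1 − λ_min⁺(AᵀA)/m) · ‖x − x⋆‖₂². -/

import Mathlib

open Matrix Finset

/-- The largest eigenvalue of a square real matrix (as the supremum of its
eigenvalue set). -/
noncomputable def maxEig {k : ℕ} (M : Matrix (Fin k) (Fin k) ℝ) : ℝ :=
  sSup {μ : ℝ | Module.End.HasEigenvalue (Matrix.mulVecLin M) μ}

/-- The smallest positive eigenvalue of a square real matrix. -/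
noncomputable def minPosEig {k : ℕ} (M : Matrix (Fin k) (Fin k) ℝ) : ℝ :=
  sInf {μ : ℝ | Module.End.HasEigenvalue (Matrix.mulVecLin M) μ ∧ 0 < μ}

/-- The restriction of `A` to the rows indexed by `I`. -/
def rowSub {m n : ℕ} (A : Matrix (Fin m) (Fin n) ℝ) (I : Finset (Fin m)) :
    Matrix {i : Fin m // i ∈ I} (Fin n) ℝ :=
  fun i j => A i.1 j

/-- Squared Euclidean norm. -/
noncomputable def sqNorm {k : ℕ} (v : Fin k → ℝ) : ℝ := ∑ j, (v j) ^ 2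

/-- `xp` is the exact block Kaczmarz update of `x` with respect to the row
index set `I`: it satisfies the equations indexed by `I` and minimizes the
distance to `x` among all such points (hence is the orthogonal projection of
`x` onto the affine solution set, which is the unique such minimizer). -/
def IsKaczmarzUpdate {m n : ℕ} (A : Matrix (Fin m) (Fin n) ℝ)
    (b : Fin m → ℝ) (I : Finset (Fin m)) (x xp : Fin n → ℝ) : Prop :=
  (∀ i ∈ I, A i ⬝ᵥ xp = b i) ∧
  ∀ y : Fin n → ℝ, (∀ i ∈ I, A i ⬝ᵥ y = b i) → sqNorm (xp - x) ≤ sqNorm (y - x)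

/-- `I` is a greedy `δ`-subset of `τ` for `x`: `I ⊆ τ`, `|I| = δ`, and the
residual entries on `I` dominate (in absolute value) those on `τ \ I`. -/
def IsGreedySubset {m n : ℕ} (A : Matrix (Fin m) (Fin n) ℝ) (b : Fin m → ℝ)
    (x : Fin n → ℝ) (δ : ℕ) (τ I : Finset (Fin m)) : Prop :=
  I ⊆ τ ∧ I.card = δ ∧
    ∀ i ∈ I, ∀ j ∈ τ \ I, |A j ⬝ᵥ x - b j| ≤ |A i ⬝ᵥ x - b i|

/-!
Projecting `x` onto the hyperplane of the `i`-th equation removes from the error `e = x - x⋆` its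
component along the row `aᵢ`, so by Pythagoras `‖aᵢ‖²` times the new squared error is
`‖aᵢ‖² ‖e‖² - (aᵢ ⬝ e)²`. Summing over the rows gives `‖A‖_F² ‖e‖² - ‖A e‖²`. Since `e` lies in the
row space, it is orthogonal to `ker A = ker (Aᵀ A)`, so in an orthonormal eigenbasis of `Aᵀ A` it
only sees positive eigenvalues and `‖A e‖² ≥ λ_min⁺(Aᵀ A) ‖e‖²`.
-/

section Spectral

variable {ι : Type*} [Fintype ι]

lemma sum_orthonormalBasis_dotProduct_mul {κ : Type*} [Fintype κ]
    (u : OrthonormalBasis κ ℝ (EuclideanSpace ℝ ι)) (v w : ι → ℝ) :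
    ∑ i, ((u i).ofLp ⬝ᵥ v) * ((u i).ofLp ⬝ᵥ w) = v ⬝ᵥ w := by
  simpa [EuclideanSpace.inner_eq_star_dotProduct, dotProduct_comm] using
    u.sum_inner_mul_inner (WithLp.toLp 2 v) (WithLp.toLp 2 w)

variable [DecidableEq ι] {M : Matrix ι ι ℝ}

lemma eigenvectorBasis_dotProduct_mulVec (hM : M.IsHermitian) (i : ι) (v : ι → ℝ) :
    (hM.eigenvectorBasis i).ofLp ⬝ᵥ M *ᵥ v =
      hM.eigenvalues i * ((hM.eigenvectorBasis i).ofLp ⬝ᵥ v) := by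
  have hsymm : Mᵀ = M := by simpa using hM.eq
  rw [dotProduct_mulVec, ← mulVec_transpose, hsymm, hM.mulVec_eigenvectorBasis, smul_dotProduct,
    smul_eq_mul]

lemma dotProduct_mulVec_eq_sum_eigenvalues (hM : M.IsHermitian) (v : ι → ℝ) :
    v ⬝ᵥ M *ᵥ v = ∑ i, hM.eigenvalues i * ((hM.eigenvectorBasis i).ofLp ⬝ᵥ v) ^ 2 := by
  rw [← sum_orthonormalBasis_dotProduct_mul hM.eigenvectorBasis]
  refine sum_congr rfl fun i _ => ?_
  rw [eigenvectorBasis_dotProduct_mulVec]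
  ring

lemma hasEigenvalue_mulVecLin_eigenvalues (hM : M.IsHermitian) (i : ι) :
    Module.End.HasEigenvalue M.mulVecLin (hM.eigenvalues i) :=
  Module.End.hasEigenvalue_of_hasEigenvector
    ⟨Module.End.mem_eigenspace_iff.mpr (hM.mulVec_eigenvectorBasis i),
      (WithLp.ofLp_eq_zero 2).not.mpr (hM.eigenvectorBasis.orthonormal.ne_zero i)⟩

end Spectral

lemma sqNorm_eq_dotProduct {k : ℕ} (v : Fin k → ℝ) : sqNorm v = v ⬝ᵥ v := by
  simp only [sqNorm, dotProduct, sq]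

lemma sqNorm_nonneg {k : ℕ} (v : Fin k → ℝ) : 0 ≤ sqNorm v :=
  sum_nonneg fun j _ => sq_nonneg (v j)

lemma sqNorm_pos {k : ℕ} {v : Fin k → ℝ} (hv : v ≠ 0) : 0 < sqNorm v := by
  rw [sqNorm_eq_dotProduct]
  simpa using dotProduct_star_self_pos_iff.mpr hv

lemma minPosEig_le {k : ℕ} {M : Matrix (Fin k) (Fin k) ℝ} {μ : ℝ}
    (h : Module.End.HasEigenvalue M.mulVecLin μ) (hμ : 0 < μ) : minPosEig M ≤ μ :=
  csInf_le ⟨0, fun _ hν => hν.2.le⟩ ⟨h, hμ⟩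

lemma minPosEig_mul_sqNorm_le_dotProduct_mulVec {k : ℕ} {M : Matrix (Fin k) (Fin k) ℝ}
    (hM : M.PosSemidef) {v : Fin k → ℝ} (hv : ∀ u, M *ᵥ u = 0 → u ⬝ᵥ v = 0) :
    minPosEig M * sqNorm v ≤ v ⬝ᵥ M *ᵥ v := by
  have hnorm : sqNorm v = ∑ i, ((hM.isHermitian.eigenvectorBasis i).ofLp ⬝ᵥ v) ^ 2 := by
    simp only [sqNorm_eq_dotProduct, sq, sum_orthonormalBasis_dotProduct_mul]
  rw [hnorm, dotProduct_mulVec_eq_sum_eigenvalues hM.isHermitian, mul_sum]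
  refine sum_le_sum fun i _ => ?_
  rcases (hM.eigenvalues_nonneg i).eq_or_lt with hzero | hpos
  · have hker : M *ᵥ (hM.isHermitian.eigenvectorBasis i).ofLp = 0 := by
      rw [hM.isHermitian.mulVec_eigenvectorBasis, ← hzero, zero_smul]
    simp [hv _ hker]
  · gcongr
    exact minPosEig_le (hasEigenvalue_mulVecLin_eigenvalues hM.isHermitian i) hpos

lemma minPosEig_mul_sqNorm_le_of_mem_range_transpose {ι : Type*} [Fintype ι] {n : ℕ}
    (A : Matrix ι (Fin n) ℝ) {v : Fin n → ℝ} (hv : v ∈ Set.range Aᵀ.mulVec) :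
    minPosEig (Aᵀ * A) * sqNorm v ≤ A *ᵥ v ⬝ᵥ A *ᵥ v := by
  have hpsd : (Aᵀ * A).PosSemidef := by simpa using posSemidef_conjTranspose_mul_self A
  have hquad : v ⬝ᵥ (Aᵀ * A) *ᵥ v = A *ᵥ v ⬝ᵥ A *ᵥ v := by
    rw [← mulVec_mulVec, dotProduct_mulVec, vecMul_transpose]
  rw [← hquad]
  refine minPosEig_mul_sqNorm_le_dotProduct_mulVec hpsd fun u hu => ?_
  have hAu : A *ᵥ u = 0 := (conjTranspose_mul_self_mulVec_eq_zero A u).mp (by simpa using hu)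
  obtain ⟨w, rfl⟩ := hv
  rw [dotProduct_mulVec, vecMul_transpose, hAu, zero_dotProduct]

section Kaczmarz

variable {n : ℕ}

/-- The Kaczmarz update of `x` for the single equation `a ⬝ᵥ y = β`: the orthogonal projection of
`x` onto its solution hyperplane. For `a = 0` the division by zero makes it `x`. -/
noncomputable def kaczmarzStep (a : Fin n → ℝ) (β : ℝ) (x : Fin n → ℝ) : Fin n → ℝ :=
  x - ((a ⬝ᵥ x - β) / sqNorm a) • a

lemma kaczmarzStep_of_sqNorm_eq_one {a : Fin n → ℝ} (ha : sqNorm a = 1) (β : ℝ)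
    (x : Fin n → ℝ) : kaczmarzStep a β x = fun j => x j - (a ⬝ᵥ x - β) * a j := by
  rw [kaczmarzStep, ha, div_one]
  rfl

lemma sqNorm_mul_sqNorm_kaczmarzStep_sub (a x y : Fin n → ℝ) :
    sqNorm a * sqNorm (kaczmarzStep a (a ⬝ᵥ y) x - y) =
      sqNorm a * sqNorm (x - y) - (a ⬝ᵥ (x - y)) ^ 2 := by
  rcases eq_or_ne a 0 with rfl | ha
  · simp [sqNorm]
  have hstep : kaczmarzStep a (a ⬝ᵥ y) x - y =
      (x - y) - (a ⬝ᵥ (x - y) / sqNorm a) • a := by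
    rw [kaczmarzStep, dotProduct_sub, sub_right_comm]
  have hexpand (c : ℝ) : sqNorm (x - y - c • a) =
      sqNorm (x - y) - 2 * c * (a ⬝ᵥ (x - y)) + c ^ 2 * sqNorm a := by
    simp only [sqNorm_eq_dotProduct, sub_dotProduct, dotProduct_sub, smul_dotProduct,
      dotProduct_smul, smul_eq_mul, dotProduct_comm x a, dotProduct_comm y a]
    ring
  have hpos := sqNorm_pos ha
  rw [hstep, hexpand]
  field_simp
  ring

variable {ι : Type*} [Fintype ι]

lemma sum_sqNorm_mul_sqNorm_kaczmarzStep_sub (A : Matrix ι (Fin n) ℝ) (x y : Fin n → ℝ) :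
    ∑ i, sqNorm (A i) * sqNorm (kaczmarzStep (A i) ((A *ᵥ y) i) x - y) =
      (∑ i, sqNorm (A i)) * sqNorm (x - y) - A *ᵥ (x - y) ⬝ᵥ A *ᵥ (x - y) := by
  have hrow (i : ι) : sqNorm (A i) * sqNorm (kaczmarzStep (A i) ((A *ᵥ y) i) x - y) =
      sqNorm (A i) * sqNorm (x - y) - (A *ᵥ (x - y)) i * (A *ᵥ (x - y)) i := by
    rw [← sq]
    exact sqNorm_mul_sqNorm_kaczmarzStep_sub (A i) x y
  simp only [hrow, sum_sub_distrib, sum_mul, dotProduct]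

lemma sum_sqNorm_row_pos {A : Matrix ι (Fin n) ℝ} (hA : A ≠ 0) : 0 < ∑ i, sqNorm (A i) := by
  obtain ⟨i, hi⟩ := Function.ne_iff.mp hA
  exact sum_pos' (fun i _ => sqNorm_nonneg (A i)) ⟨i, mem_univ i, sqNorm_pos hi⟩

/-- The weights are the Strohmer–Vershynin probabilities `‖aᵢ‖² / ‖A‖_F²` of drawing row `i`. -/
theorem rk_one_step_average_general {A : Matrix ι (Fin n) ℝ} (hA : A ≠ 0)
    {b : ι → ℝ} {x xstar : Fin n → ℝ} (hconsistent : A *ᵥ xstar = b)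
    (hsub : x - xstar ∈ Set.range Aᵀ.mulVec) :
    (1 / ∑ i, sqNorm (A i)) *
        ∑ i, sqNorm (A i) * sqNorm (kaczmarzStep (A i) (b i) x - xstar) ≤
      (1 - minPosEig (Aᵀ * A) / ∑ i, sqNorm (A i)) * sqNorm (x - xstar) := by
  subst hconsistent
  have hpos := sum_sqNorm_row_pos hA
  rw [sum_sqNorm_mul_sqNorm_kaczmarzStep_sub]
  set F := ∑ i, sqNorm (A i)
  set e := x - xstar
  calc 1 / F * (F * sqNorm e - A *ᵥ e ⬝ᵥ A *ᵥ e)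
      ≤ 1 / F * (F * sqNorm e - minPosEig (Aᵀ * A) * sqNorm e) := by
        gcongr
        exact minPosEig_mul_sqNorm_le_of_mem_range_transpose A hsub
    _ = (1 - minPosEig (Aᵀ * A) / F) * sqNorm e := by field_simp

end Kaczmarz

theorem rk_one_step_average {m n : ℕ}
    (A : Matrix (Fin m) (Fin n) ℝ) (hA : A ≠ 0)
    (hstd : ∀ i : Fin m, ∑ j, (A i j) ^ 2 = 1)
    (b : Fin m → ℝ)
    (xstar : Fin n → ℝ) (hconsistent : A.mulVec xstar = b)
    (hxstar : xstar ∈ Set.range Aᵀ.mulVec)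
    (x : Fin n → ℝ) (hx : x ∈ Set.range Aᵀ.mulVec) :
    (1 / (m : ℝ)) *
        ∑ i : Fin m,
          sqNorm ((fun j => x j - (A i ⬝ᵥ x - b i) * A i j) - xstar) ≤
      (1 - minPosEig (Aᵀ * A) / (m : ℝ)) * sqNorm (x - xstar) := by
  have hrow (i : Fin m) : sqNorm (A i) = 1 := hstd i
  have hsub : x - xstar ∈ Set.range Aᵀ.mulVec :=
    Submodule.sub_mem (LinearMap.range Aᵀ.mulVecLin) hx hxstar
  simpa only [kaczmarzStep_of_sqNorm_eq_one, hrow, one_mul, sum_const, card_univ,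
    Fintype.card_fin, nsmul_one] using rk_one_step_average_general hA hconsistent hsub
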